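/- Helton–McCullough–Vinnikov theorem over fields of characteristic ≠ 2: if F is a field with char F ≠ 2, then every polynomial p(z) ∈ F[z₁,…,zₙ] admits a symmetric determinantal representation, i.e., there exist m ∈ ℕ and symmetric matrices A₀, A₁, …, Aₙ ∈ F^{m×m} such that p(z) = det(A₀ + Σᵢ₌₁ⁿ zᵢAᵢ) as polynomials in z₁,…,zₙ. -/

import Mathlib

namespace HMV
open MvPolynomial Matrix

/-- The polynomial is affine (equal to its affine part). -/
def Aff {F : Type*} [Field F] {n : ℕ} (q : MvPolynomial (Fin n) F) : Prop :=
  q = C (coeff 0 q) + ∑ i, X i * C (coeff (Finsupp.single i 1) q)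

/-- The polynomial is constant. -/
def Cst {F : Type*} [Field F] {n : ℕ} (q : MvPolynomial (Fin n) F) : Prop :=
  ∃ c, q = C c

variable {F : Type*} [Field F] {n : ℕ}

lemma aff_C (c : F) : Aff (C c : MvPolynomial (Fin n) F) := by
  have h : ∀ i : Fin n, (0 : Fin n →₀ ℕ) ≠ Finsupp.single i 1 := by
    intro i h
    have := DFunLike.congr_fun h i
    simp at this
  simp [Aff, coeff_C, h]

lemma aff_X (i : Fin n) : Aff (X i : MvPolynomial (Fin n) F) := by
  have h : ∀ j : Fin n, coeff (Finsupp.single j 1) (X i : MvPolynomial (Fin n) F)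
      = if i = j then 1 else 0 := by
    intro j
    rw [coeff_X]
    simp [Finsupp.single_left_inj]
  rw [Aff, coeff_zero_X]
  simp [h, apply_ite C]

lemma aff_neg {q : MvPolynomial (Fin n) F} (h : Aff q) : Aff (-q) := by
  unfold Aff at *
  conv_lhs => rw [h]
  simp [add_comm]

lemma Cst.aff {q : MvPolynomial (Fin n) F} (h : Cst q) : Aff q := by
  obtain ⟨c, rfl⟩ := h
  exact aff_C c

lemma aff_zero : Aff (0 : MvPolynomial (Fin n) F) := by
  simpa using aff_C (n := n) (0 : F)

lemma cst_zero : Cst (0 : MvPolynomial (Fin n) F) := ⟨0, by simp⟩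
lemma cst_one : Cst (1 : MvPolynomial (Fin n) F) := ⟨1, by simp⟩

/-- `p = U * M⁻¹ * V` with constant `U`, `V` and affine unimodular `M`. -/
def Rep (p : MvPolynomial (Fin n) F) : Prop :=
  ∃ (ι : Type) (_ : Fintype ι) (_ : DecidableEq ι)
    (M M' : Matrix ι ι (MvPolynomial (Fin n) F))
    (U : Matrix Unit ι (MvPolynomial (Fin n) F)) (V : Matrix ι Unit (MvPolynomial (Fin n) F)),
    M * M' = 1 ∧ (∀ i j, Aff (M i j)) ∧ (∀ i j, Cst (U i j)) ∧ (∀ i j, Cst (V i j)) ∧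
      U * M' * V = of fun _ _ => p

lemma rep_C (c : F) : Rep (C c : MvPolynomial (Fin n) F) := by
  refine ⟨Unit, inferInstance, inferInstance, 1, 1, 1, of fun _ _ => C c, by simp, ?_, ?_, ?_, by simp⟩
  · intro i j; simpa using cst_one.aff
  · intro i j; simpa using cst_one
  · intro i j; exact ⟨c, rfl⟩

lemma rep_X (k : Fin n) : Rep (X k : MvPolynomial (Fin n) F) := by
  refine ⟨Unit ⊕ Unit, inferInstance, inferInstance,
    fromBlocks 1 (of fun _ _ => - X k) 0 1, fromBlocks 1 (of fun _ _ => X k) 0 1,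
    fromCols 1 0, fromRows 0 1, ?_, ?_, ?_, ?_, ?_⟩
  · rw [fromBlocks_multiply, ← fromBlocks_one]
    congr 1 <;> ext <;> simp
  · rintro (i | i) (j | j)
    · simpa using cst_one.aff
    · simpa using aff_neg (aff_X k)
    · simpa using aff_zero
    · simpa using cst_one.aff
  · rintro i (j | j)
    · simpa using cst_one
    · simpa using cst_zero
  · rintro (i | i) j
    · simpa using cst_zero
    · simpa using cst_one
  · rw [fromCols_mul_fromBlocks, fromCols_mul_fromRows]
    ext; simp

lemma rep_add {p q : MvPolynomial (Fin n) F} (hp : Rep p) (hq : Rep q) : Rep (p + q) := by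
  obtain ⟨ι, _, _, M, M', U, V, h1, h2, h3, h4, h5⟩ := hp
  obtain ⟨κ, _, _, N, N', S, T, g1, g2, g3, g4, g5⟩ := hq
  refine ⟨ι ⊕ κ, inferInstance, inferInstance, fromBlocks M 0 0 N, fromBlocks M' 0 0 N',
    fromCols U S, fromRows V T, ?_, ?_, ?_, ?_, ?_⟩
  · rw [fromBlocks_multiply, ← fromBlocks_one]
    simp [h1, g1]
  · rintro (i | i) (j | j)
    · simpa using h2 i j
    · simpa using aff_zero
    · simpa using aff_zero
    · simpa using g2 i j
  · rintro i (j | j)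
    · simpa using h3 i j
    · simpa using g3 i j
  · rintro (i | i) j
    · simpa using h4 i j
    · simpa using g4 i j
  · rw [fromCols_mul_fromBlocks, fromCols_mul_fromRows]
    simp [h5, g5]
    ext; simp

lemma rep_mul {p q : MvPolynomial (Fin n) F} (hp : Rep p) (hq : Rep q) : Rep (p * q) := by
  obtain ⟨ι, _, _, M, M', U, V, h1, h2, h3, h4, h5⟩ := hp
  obtain ⟨κ, _, _, N, N', S, T, g1, g2, g3, g4, g5⟩ := hq
  refine ⟨ι ⊕ κ, inferInstance, inferInstance, fromBlocks M (-(V * S)) 0 N,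
    fromBlocks M' (M' * V * (S * N')) 0 N',
    fromCols U 0, fromRows 0 T, ?_, ?_, ?_, ?_, ?_⟩
  · rw [fromBlocks_multiply, ← fromBlocks_one]
    have : M * (M' * V * (S * N')) = V * S * N' := by
      simp only [← Matrix.mul_assoc]
      rw [h1, Matrix.one_mul]
    simp [h1, g1, this]
  · rintro (i | i) (j | j)
    · simpa using h2 i j
    · obtain ⟨a, ha⟩ := h4 i ()
      obtain ⟨b, hb⟩ := g3 () j
      have := aff_neg (aff_C (n := n) (a * b))
      simpa [Matrix.mul_apply, ha, hb] using this
    · simpa using aff_zero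
    · simpa using g2 i j
  · rintro i (j | j)
    · simpa using h3 i j
    · simpa using cst_zero
  · rintro (i | i) j
    · simpa using cst_zero
    · simpa using g4 i j
  · rw [fromCols_mul_fromBlocks, fromCols_mul_fromRows]
    have : U * (M' * V * (S * N')) * T = (U * M' * V) * (S * N' * T) := by
      simp only [Matrix.mul_assoc]
    simp [this, h5, g5]
    ext; simp [Matrix.mul_apply]

lemma rep_all (p : MvPolynomial (Fin n) F) : Rep p := by
  induction p using MvPolynomial.induction_on with
  | C a => exact rep_C a
  | add p q hp hq => exact rep_add hp hq
  | mul_X p i hp => exact rep_mul hp (rep_X i)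

lemma exists_symm (h2 : (2 : F) ≠ 0) (p : MvPolynomial (Fin n) F) :
    ∃ (ι : Type) (_ : Fintype ι) (_ : DecidableEq ι) (M : Matrix ι ι (MvPolynomial (Fin n) F)),
      M.IsSymm ∧ (∀ i j, Aff (M i j)) ∧ M.det = p := by
  obtain ⟨ι, _, _, M, M', U, V, h1, h2', h3, h4, h5⟩ := rep_all p
  have h1' : M' * M = 1 := mul_eq_one_comm.mp h1
  set N := fromBlocks 0 M Mᵀ 0 with hN
  set N' := fromBlocks 0 M'ᵀ M' 0 with hN'
  have hNN : N * N' = 1 := by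
    rw [hN, hN', fromBlocks_multiply, ← fromBlocks_one]
    simp [h1, ← Matrix.transpose_mul, h1']
  have hNN' : N' * N = 1 := mul_eq_one_comm.mp hNN
  letI : Invertible N := ⟨N', hNN', hNN⟩
  have hu : IsUnit N.det := (Matrix.isUnit_iff_isUnit_det N).mp (isUnit_of_invertible N)
  obtain ⟨k, hk, hkd⟩ : ∃ k : F, k ≠ 0 ∧ N.det = C k := by
    obtain ⟨r, hr, h⟩ := MvPolynomial.isUnit_iff_eq_C_of_isReduced.mp hu
    exact ⟨r, hr.ne_zero, h⟩
  set W := fromRows V Uᵀ with hW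
  have hS : (fromBlocks N W Wᵀ (0 : Matrix Unit Unit (MvPolynomial (Fin n) F))).det
      = C (-(2 * k)) * p := by
    rw [det_fromBlocks₁₁, hkd]
    have e : Wᵀ * ⅟N * W = of fun _ _ => 2 * p := by
      change Wᵀ * N' * W = _
      have h5' : Vᵀ * M'ᵀ * Uᵀ = of fun _ _ => p := by
        have := congrArg Matrix.transpose h5
        rw [Matrix.transpose_mul, Matrix.transpose_mul, ← Matrix.mul_assoc] at this
        rw [this]; ext; simp
      rw [hW, hN', transpose_fromRows, fromCols_mul_fromBlocks, fromCols_mul_fromRows]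
      simp [h5, h5']
      ext; simp [two_mul]
    rw [e]
    have hc : (C 2 : MvPolynomial (Fin n) F) = 2 := map_ofNat C 2
    simp [hc]
    ring
  refine ⟨((ι ⊕ ι) ⊕ Unit) ⊕ Unit, inferInstance, inferInstance,
    fromBlocks (fromBlocks N W Wᵀ 0) 0 0 (of fun _ _ => C (-(2 * k))⁻¹), ?_, ?_, ?_⟩
  · refine IsSymm.fromBlocks (IsSymm.fromBlocks (IsSymm.fromBlocks ?_ rfl ?_) rfl ?_) (by simp) ?_
    all_goals (ext; simp)
  · have hWc : ∀ i j, Aff (W i j) := by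
      rintro (i | i) j
      · simpa [hW] using (h4 i j).aff
      · simpa [hW] using (h3 j i).aff
    rintro (((i | i) | i) | i) (((j | j) | j) | j)
    all_goals simp only [hN, fromBlocks_apply₁₁, fromBlocks_apply₁₂, fromBlocks_apply₂₁,
      fromBlocks_apply₂₂, transpose_apply, Matrix.zero_apply, of_apply]
    all_goals first | exact aff_zero | exact hWc _ _ | exact h2' _ _ | exact aff_C _
  · rw [det_fromBlocks_zero₂₁, hS, det_unique, of_apply, mul_right_comm, ← C_mul,
      mul_inv_cancel₀ (by simp [h2, hk]), C_1, one_mul]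

end HMV

open MvPolynomial in
theorem hmv_theorem {F : Type*} [Field F] (h2 : (2 : F) ≠ 0) {n : ℕ}
    (p : MvPolynomial (Fin n) F) :
    ∃ (m : ℕ) (A0 : Matrix (Fin m) (Fin m) F) (A : Fin n → Matrix (Fin m) (Fin m) F),
      A0.IsSymm ∧ (∀ i, (A i).IsSymm) ∧
      p = Matrix.det (A0.map C + ∑ i, (X i : MvPolynomial (Fin n) F) • (A i).map C) := by
  obtain ⟨ι, _, _, M, hs, ha, hd⟩ := HMV.exists_symm h2 p
  let e := Fintype.equivFin ι
  let N := Matrix.reindex e e M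
  have hNs : ∀ i j, N i j = N j i := fun i j => hs.apply _ _
  refine ⟨Fintype.card ι, N.map (coeff 0), fun k => N.map (coeff (Finsupp.single k 1)), ?_, ?_, ?_⟩
  · ext i j
    simp only [Matrix.transpose_apply, Matrix.map_apply, hNs i j]
  · intro k
    ext i j
    simp only [Matrix.transpose_apply, Matrix.map_apply, hNs i j]
  · rw [← hd, ← Matrix.det_reindex_self e M]
    congr 1
    ext1 i j
    have := ha (e.symm i) (e.symm j)
    rw [HMV.Aff] at this
    simp only [Matrix.add_apply, Matrix.sum_apply, Matrix.smul_apply, Matrix.map_apply, smul_eq_mul]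
    exact this
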